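/- arXiv:1806.08992 — 3 statements merged into one kernel-verified Lean document; each statement's English description precedes it below -/
import Mathlib

section
/- (Asymptotic Gilbert–Varshamov bound for symbol-pair codes) For every prime power q, every real δ ∈ (0,1) with κ_sp(δ) < 1, and every ε > 0, for all sufficiently large n there exists a code C ⊆ F_q^n with minimum pair distance at least δn and rate (log_q |C|)/n ≥ 1 − κ_sp(δ) − ε. -/
/-- The symbol-pair distance between two vectors `x, y : Fin n → F`. -/
def pairDist {F : Type*} [DecidableEq F] {n : ℕ} (x y : Fin n → F) : ℕ :=
  (Finset.univ.filter fun i : Fin n =>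
    (x i, x ⟨(i.1 + 1) % n, Nat.mod_lt _ i.pos⟩) ≠
    (y i, y ⟨(i.1 + 1) % n, Nat.mod_lt _ i.pos⟩)).card

/-- The `q`-ary entropy function `H_q(x)` (with `H_q(0) = 0`, since `logb q 0 = 0`). -/
noncomputable def qEntropy (q : ℕ) (x : ℝ) : ℝ :=
  x * Real.logb q (q - 1) - x * Real.logb q x - (1 - x) * Real.logb q (1 - x)

/-- `κ_sp(δ) = max_{0 ≤ θ/2 ≤ β ≤ θ ≤ δ} [β H_q((2β−θ)/β) + (1−β) H_q((θ−β)/(1−β))]`. -/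
noncomputable def kappaSP (q : ℕ) (δ : ℝ) : ℝ :=
  sSup {y : ℝ | ∃ β θ : ℝ, 0 ≤ θ / 2 ∧ θ / 2 ≤ β ∧ β ≤ θ ∧ θ ≤ δ ∧
    y = β * qEntropy q ((2 * β - θ) / β) + (1 - β) * qEntropy q ((θ - β) / (1 - β))}

/-!
A maximal code with pair distance at least `δn` covers the whole space by pair balls of radius
`δn`, so it has at least `qⁿ / V` words when `V` bounds the volume of these balls. If the positions
where `x` and `y` differ form a cyclic binary word with `w` ones and `r` rises `01`, then `x` and
`y` are at pair distance exactly `w + r`, and each such binary word accounts for `(q - 1)ʷ`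
vectors `x`.

The binary words with given `w` and `r` are counted by the method of types. A cyclic word has as
many falls `10` as rises, so in the Markov chain that leaves `1` with probability `r / w` and `0`
with probability `r / (n - w)` all these words have the same weight `exp (-E)`, where
`E = w H(r / w) + (n - w) H(r / (n - w))` and `H` is the binary entropy. The weights of all cyclic
words have sum at most `2`, so there are at most `2 exp E` words of this type. With `β = w / n` and
`θ = (w + r) / n` the product `(q - 1)ʷ exp E` is at most `q ^ (n κ_sp(δ))`, and since there are at
most `(n + 1)²` types, `V = 2 (n + 1)² q ^ (n κ_sp(δ))` will do.
-/

namespace SymbolPair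

open Finset Real

section CyclicWords

variable {α : Type*} {n : ℕ}

section TransitionWeights

variable [Fintype α]

theorem sum_prod_path_eq_card {R : Type*} [CommSemiring R] {P : α → α → R}
    (hP : ∀ a, ∑ b, P a b = 1) (n : ℕ) :
    ∑ s : Fin (n + 1) → α, ∏ i : Fin n, P (s i.castSucc) (s i.succ) = Fintype.card α := by
  induction n with
  | zero => simp
  | succ n ih =>
    rw [← (Fin.snocEquiv fun _ : Fin (n + 2) => α).sum_comp, Fintype.sum_prod_type_right, ← ih]
    refine Fintype.sum_congr _ _ fun s => ?_
    have hsnoc (a : α) :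
        ∏ i : Fin (n + 1), P ((Fin.snoc s a : Fin (n + 2) → α) i.castSucc)
            ((Fin.snoc s a : Fin (n + 2) → α) i.succ) =
          (∏ i : Fin n, P (s i.castSucc) (s i.succ)) * P (s (Fin.last n)) a := by
      simp only [Fin.prod_univ_castSucc, Fin.snoc_castSucc, Fin.succ_castSucc, Fin.succ_last,
        Fin.snoc_last]
    simp only [Fin.snocEquiv, Equiv.coe_fn_mk, hsnoc, ← mul_sum, hP, mul_one]

theorem sum_prod_cycle_le_card [Nonempty α] {P : α → α → ℝ} (hP₀ : ∀ a b, 0 ≤ P a b)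
    (hP : ∀ a, ∑ b, P a b = 1) (n : ℕ) :
    ∑ s : Fin n → α, ∏ i, P (s i) (s (finRotate n i)) ≤ Fintype.card α := by
  cases n with
  | zero => simpa using Nat.one_le_iff_ne_zero.mpr Fintype.card_ne_zero
  | succ n =>
    rw [← sum_prod_path_eq_card hP n]
    refine sum_le_sum fun s _ => ?_
    have hlast : P (s (Fin.last n)) (s 0) ≤ 1 :=
      hP (s (Fin.last n)) ▸ single_le_sum (fun b _ => hP₀ _ b) (mem_univ _)
    rw [Fin.prod_univ_castSucc, finRotate_last]
    simp only [finRotate_apply, Fin.coeSucc_eq_succ]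
    exact mul_le_of_le_one_right (prod_nonneg fun i _ => hP₀ _ _) hlast

end TransitionWeights

variable [DecidableEq α]

/-- The number of positions at which the word `s` has the symbol `a`. -/
def symbolCount (s : Fin n → α) (a : α) : ℕ := #{i | s i = a}

/-- The number of positions at which the word `s`, read cyclically, has the symbol `a` followed
by the symbol `b`. -/
def transitionCount (s : Fin n → α) (a b : α) : ℕ := #{i | s i = a ∧ s (finRotate n i) = b}

theorem symbolCount_le (s : Fin n → α) (a : α) : symbolCount s a ≤ n :=
  (card_filter_le _ _).trans_eq (by simp)

variable [Fintype α]

theorem sum_symbolCount (s : Fin n → α) : ∑ a, symbolCount s a = n := by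
  simpa [symbolCount] using
    (card_eq_sum_card_fiberwise (f := s) (s := univ) (t := univ) (by simp)).symm

theorem sum_transitionCount_right (s : Fin n → α) (a : α) :
    ∑ b, transitionCount s a b = symbolCount s a := by
  simp only [symbolCount, transitionCount, ← filter_filter]
  exact (card_eq_sum_card_fiberwise (by simp)).symm

theorem sum_transitionCount_left (s : Fin n → α) (b : α) :
    ∑ a, transitionCount s a b = symbolCount s b := by
  have hrotate : #{i | s (finRotate n i) = b} = symbolCount s b :=
    card_equiv (finRotate n) (by simp)
  simp only [← hrotate, transitionCount, and_comm (b := _ = b), ← filter_filter]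
  exact (card_eq_sum_card_fiberwise (by simp)).symm

theorem prod_cycle_eq_prod_pow_transitionCount {M : Type*} [CommMonoid M] (P : α → α → M)
    (s : Fin n → α) :
    ∏ i, P (s i) (s (finRotate n i)) = ∏ a, ∏ b, P a b ^ transitionCount s a b := by
  rw [← Fintype.prod_prod_type' fun a b => P a b ^ transitionCount s a b,
    ← prod_fiberwise univ (fun i => (s i, s (finRotate n i)))]
  refine Fintype.prod_congr _ _ fun ⟨a, b⟩ => ?_
  rw [transitionCount, ← prod_const]
  exact prod_congr (by simp) fun i hi => by simp_all

end CyclicWords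

section BinaryWords

variable {n : ℕ}

/-- The number of cyclic rises of a binary word, that is, of entries `false` followed by `true`. -/
def riseCount (s : Fin n → Bool) : ℕ := transitionCount s false true

theorem transitionCount_not (s : Fin n → Bool) (c : Bool) :
    transitionCount s c (!c) = riseCount s := by
  have hright := sum_transitionCount_right s true
  have hleft := sum_transitionCount_left s true
  rw [Fintype.sum_bool] at hright hleft
  cases c
  · rfl
  · simp only [Bool.not_true, riseCount]
    omega

theorem transitionCount_self_add_riseCount (s : Fin n → Bool) (c : Bool) :
    transitionCount s c c + riseCount s = symbolCount s c := by
  rw [← transitionCount_not s c, ← sum_transitionCount_right s c, Fintype.sum_bool]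
  cases c <;> simp [add_comm]

theorem riseCount_le_symbolCount (s : Fin n → Bool) (c : Bool) :
    riseCount s ≤ symbolCount s c :=
  transitionCount_self_add_riseCount s c ▸ Nat.le_add_left _ _

theorem symbolCount_false (s : Fin n → Bool) : symbolCount s false = n - symbolCount s true := by
  have hsum := sum_symbolCount s
  rw [Fintype.sum_bool] at hsum
  omega

/-- The transition probabilities of the two-state Markov chain that leaves the state `a` with
probability `p a`. -/
def flipKernel (p : Bool → ℝ) (a b : Bool) : ℝ := if a = b then 1 - p a else p a

theorem sum_flipKernel (p : Bool → ℝ) (a : Bool) : ∑ b, flipKernel p a b = 1 := by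
  cases a <;> simp [flipKernel]

theorem flipKernel_nonneg {p : Bool → ℝ} (hp₀ : ∀ a, 0 ≤ p a) (hp₁ : ∀ a, p a ≤ 1) (a b : Bool) :
    0 ≤ flipKernel p a b := by
  unfold flipKernel
  split_ifs
  exacts [sub_nonneg.mpr (hp₁ a), hp₀ a]

theorem prod_cycle_flipKernel (p : Bool → ℝ) (s : Fin n → Bool) :
    ∏ i, flipKernel p (s i) (s (finRotate n i)) =
      ∏ a, p a ^ riseCount s * (1 - p a) ^ (symbolCount s a - riseCount s) := by
  rw [prod_cycle_eq_prod_pow_transitionCount]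
  refine Fintype.prod_congr _ _ fun a => ?_
  rw [← transitionCount_self_add_riseCount s a, Nat.add_sub_cancel, ← transitionCount_not s a]
  cases a <;> simp [flipKernel, mul_comm]

theorem pow_mul_one_sub_pow_eq_exp_neg_binEntropy {k m : ℕ} (h : k ≤ m) :
    (k / m : ℝ) ^ k * (1 - k / m : ℝ) ^ (m - k) = exp (-(m * binEntropy (k / m))) := by
  have hleft : (0 : ℝ) < (k / m : ℝ) ^ k := by
    rcases Nat.eq_zero_or_pos k with rfl | hk
    · simp
    · have hm : 0 < m := hk.trans_le h
      positivity
  have hright : (0 : ℝ) < (1 - k / m : ℝ) ^ (m - k) := by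
    rcases h.eq_or_lt with rfl | hlt
    · simp
    · have hm : (0 : ℝ) < m := by exact_mod_cast (Nat.zero_le k).trans_lt hlt
      exact pow_pos (sub_pos.mpr ((div_lt_one hm).mpr (by exact_mod_cast hlt))) _
  rw [← exp_log (mul_pos hleft hright), log_mul hleft.ne' hright.ne', log_pow, log_pow,
    Nat.cast_sub h, binEntropy_eq_negMulLog_add_negMulLog_one_sub, negMulLog, negMulLog]
  rcases Nat.eq_zero_or_pos m with rfl | hm
  · simp_all
  · congr 1
    field_simp
    ring

/-- The type of a binary word: its number of entries `true` and its number of cyclic rises.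
These determine all its cyclic transition counts. -/
def cyclicType (s : Fin n → Bool) : ℕ × ℕ := (symbolCount s true, riseCount s)

/-- The entropy of the empirical Markov chain of a cyclic binary word: up to a factor `2`, its
exponential bounds the number of words of the same type. -/
noncomputable def typeEntropy (s : Fin n → Bool) : ℝ :=
  ∑ a, symbolCount s a * binEntropy (riseCount s / symbolCount s a)

theorem symbolCount_eq_of_cyclicType_eq {s t : Fin n → Bool} (h : cyclicType t = cyclicType s)
    (a : Bool) : symbolCount t a = symbolCount s a := by
  have htrue : symbolCount t true = symbolCount s true := congrArg Prod.fst h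
  cases a
  · rw [symbolCount_false, symbolCount_false, htrue]
  · exact htrue

theorem cyclicType_mem_range_product (s : Fin n → Bool) :
    cyclicType s ∈ range (n + 1) ×ˢ range (n + 1) := by
  have hweight := symbolCount_le s true
  have hrise := riseCount_le_symbolCount s true
  simp only [cyclicType, mem_product, mem_range]
  omega

theorem card_cyclicType_eq_le (s : Fin n → Bool) :
    (#{t : Fin n → Bool | cyclicType t = cyclicType s} : ℝ) ≤ 2 * exp (typeEntropy s) := by
  set p : Bool → ℝ := fun a => riseCount s / symbolCount s a with hp
  have hp₀ (a : Bool) : 0 ≤ p a := by positivity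
  have hp₁ (a : Bool) : p a ≤ 1 :=
    div_le_one_of_le₀ (by exact_mod_cast riseCount_le_symbolCount s a) (Nat.cast_nonneg _)
  have hkernel := flipKernel_nonneg hp₀ hp₁
  have hweight (t : Fin n → Bool) (ht : cyclicType t = cyclicType s) :
      ∏ i, flipKernel p (t i) (t (finRotate n i)) = exp (-typeEntropy s) := by
    have hrise : riseCount t = riseCount s := congrArg Prod.snd ht
    simp only [prod_cycle_flipKernel, symbolCount_eq_of_cyclicType_eq ht, hrise, hp,
      pow_mul_one_sub_pow_eq_exp_neg_binEntropy (riseCount_le_symbolCount s _), ← exp_sum,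
      sum_neg_distrib, typeEntropy]
  have hsum : #{t : Fin n → Bool | cyclicType t = cyclicType s} * exp (-typeEntropy s) ≤ 2 :=
    calc #{t : Fin n → Bool | cyclicType t = cyclicType s} * exp (-typeEntropy s)
        = ∑ t with cyclicType t = cyclicType s, ∏ i, flipKernel p (t i) (t (finRotate n i)) := by
          rw [sum_congr rfl fun t ht => hweight t (mem_filter.mp ht).2, sum_const, nsmul_eq_mul]
      _ ≤ ∑ t : Fin n → Bool, ∏ i, flipKernel p (t i) (t (finRotate n i)) :=
          sum_le_univ_sum_of_nonneg fun t => prod_nonneg fun i _ => hkernel _ _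
      _ ≤ 2 := by simpa using sum_prod_cycle_le_card hkernel (sum_flipKernel p) n
  rwa [exp_neg, ← div_eq_mul_inv, div_le_iff₀ (exp_pos _)] at hsum

end BinaryWords

section DiffPattern

variable {F : Type*} [DecidableEq F] {n : ℕ}

/-- The binary word marking the positions at which `x` and `y` differ. It determines their pair
distance. -/
def diffPattern (x y : Fin n → F) : Fin n → Bool := fun i => decide (x i ≠ y i)

theorem pairDist_comm (x y : Fin n → F) : pairDist x y = pairDist y x := by
  simp only [pairDist, ne_comm]

theorem pairDist_self (x : Fin n → F) : pairDist x x = 0 := by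
  simp [pairDist]

theorem pairDist_eq_symbolCount_add_riseCount (x y : Fin n → F) :
    pairDist x y = symbolCount (diffPattern x y) true + riseCount (diffPattern x y) := by
  have hsucc (i : Fin n) : (⟨(i.1 + 1) % n, Nat.mod_lt _ i.pos⟩ : Fin n) = finRotate n i := by
    have := i.neZero
    ext
    simp [finRotate_apply, Fin.val_add]
  rw [symbolCount, riseCount, transitionCount, ← card_union_of_disjoint, pairDist]
  · congr 1
    ext i
    simp only [hsucc, diffPattern, mem_filter, mem_union]
    grind
  · exact disjoint_filter.mpr fun i _ htrue hrise => by simp [htrue] at hrise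

variable [Fintype F]

theorem card_diffPattern_eq (y : Fin n → F) (s : Fin n → Bool) :
    #{x | diffPattern x y = s} = (Fintype.card F - 1) ^ symbolCount s true := by
  have hpi : ({x | diffPattern x y = s} : Finset (Fin n → F)) =
      Fintype.piFinset fun i => if s i = true then {y i}ᶜ else {y i} := by
    ext x
    simp only [mem_filter, mem_univ, true_and, Fintype.mem_piFinset, funext_iff, diffPattern]
    refine forall_congr' fun i => ?_
    cases s i <;> simp
  simp only [hpi, Fintype.card_piFinset, apply_ite card, card_compl, card_singleton,
    prod_ite, prod_const, one_pow, mul_one, symbolCount]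

theorem card_cyclicType_diffPattern_eq_le (x y : Fin n → F) :
    (#{z | cyclicType (diffPattern z y) = cyclicType (diffPattern x y)} : ℝ) ≤
      2 * ((Fintype.card F - 1 : ℕ) ^ symbolCount (diffPattern x y) true *
        exp (typeEntropy (diffPattern x y))) := by
  set s := diffPattern x y
  have hcard : #{z | cyclicType (diffPattern z y) = cyclicType s} =
      #{t : Fin n → Bool | cyclicType t = cyclicType s} *
        (Fintype.card F - 1) ^ symbolCount s true := by
    rw [card_eq_sum_card_fiberwise (f := (diffPattern · y)) (t := {t | cyclicType t = cyclicType s})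
      (by intro z hz; simpa using hz)]
    refine sum_const_nat fun t ht => ?_
    have ht : cyclicType t = cyclicType s := (mem_filter.mp ht).2
    rw [← symbolCount_eq_of_cyclicType_eq ht, ← card_diffPattern_eq y t, filter_filter]
    congr 1
    ext z
    simp only [mem_filter, mem_univ, true_and, and_iff_right_iff_imp]
    rintro rfl
    exact ht
  calc (#{z | cyclicType (diffPattern z y) = cyclicType s} : ℝ)
      = #{t : Fin n → Bool | cyclicType t = cyclicType s} *
          (Fintype.card F - 1 : ℕ) ^ symbolCount s true := by exact_mod_cast hcard
    _ ≤ 2 * exp (typeEntropy s) * (Fintype.card F - 1 : ℕ) ^ symbolCount s true := by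
        gcongr
        exact card_cyclicType_eq_le s
    _ = _ := by ring

end DiffPattern

section Exponent

/-- The function of `β` and `θ` maximised in the definition of `kappaSP`: the growth rate, to
base `q`, of the words at pair distance `θn` from a given one that differ from it in `βn` places. -/
noncomputable def pairExponent (q : ℕ) (β θ : ℝ) : ℝ :=
  β * qEntropy q ((2 * β - θ) / β) + (1 - β) * qEntropy q ((θ - β) / (1 - β))

variable {q : ℕ} {δ : ℝ}

theorem qEntropy_eq_div_log (q : ℕ) (x : ℝ) :
    qEntropy q x = (x * log (q - 1) + binEntropy x) / log q := by
  rw [binEntropy_eq_negMulLog_add_negMulLog_one_sub, negMulLog, negMulLog, qEntropy, logb, logb,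
    logb]
  ring

theorem qEntropy_le (hq : 2 ≤ q) {x : ℝ} (hx : x ≤ 1) :
    qEntropy q x ≤ (log (q - 1) + log 2) / log q := by
  have hqR : (2 : ℝ) ≤ q := by exact_mod_cast hq
  have hlog : 0 ≤ log ((q : ℝ) - 1) := log_nonneg (by linarith)
  rw [qEntropy_eq_div_log]
  gcongr
  · exact mul_le_of_le_one_left hlog hx
  · exact binEntropy_le_log_two

theorem pairExponent_le (hq : 2 ≤ q) {β θ : ℝ} (hβ : θ / 2 ≤ β) (hθ : β ≤ θ) (hθ₁ : θ ≤ 1) :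
    pairExponent q β θ ≤ (log (q - 1) + log 2) / log q := by
  have htrue : qEntropy q ((2 * β - θ) / β) ≤ (log (q - 1) + log 2) / log q :=
    qEntropy_le hq (div_le_one_of_le₀ (by linarith) (by linarith))
  have hfalse : qEntropy q ((θ - β) / (1 - β)) ≤ (log (q - 1) + log 2) / log q :=
    qEntropy_le hq (div_le_one_of_le₀ (by linarith) (by linarith))
  exact (add_le_add (mul_le_mul_of_nonneg_left htrue (by linarith))
    (mul_le_mul_of_nonneg_left hfalse (by linarith))).trans_eq (by ring)

theorem pairExponent_le_kappaSP (hq : 2 ≤ q) (hδ : δ ≤ 1) {β θ : ℝ} (hβ : θ / 2 ≤ β)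
    (hβθ : β ≤ θ) (hθ : θ ≤ δ) : pairExponent q β θ ≤ kappaSP q δ := by
  refine le_csSup ⟨(log (q - 1) + log 2) / log q, ?_⟩
    ⟨β, θ, by linarith, hβ, hβθ, hθ, rfl⟩
  rintro _ ⟨β', θ', -, hβ', hβθ', hθ', rfl⟩
  exact pairExponent_le hq hβ' hβθ' (hθ'.trans hδ)

theorem pairExponent_mul_log (hq : 2 ≤ q) {w r n : ℝ} (hr : 0 ≤ r) (hrw : r ≤ w) (hwn : w < n) :
    pairExponent q (w / n) ((w + r) / n) * n * log q =
      w * log (q - 1) + (w * binEntropy (r / w) + (n - w) * binEntropy (r / (n - w))) := by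
  have hlog : log q ≠ 0 := (log_pos (by exact_mod_cast hq)).ne'
  have hn : n ≠ 0 := by linarith
  have hz : n - w ≠ 0 := by linarith
  have hfalse : ((w + r) / n - w / n) / (1 - w / n) = r / (n - w) := by
    field_simp
    ring
  rcases eq_or_ne w 0 with rfl | hw
  · obtain rfl : r = 0 := le_antisymm hrw hr
    simp [pairExponent, qEntropy]
  · have htrue : (2 * (w / n) - (w + r) / n) / (w / n) = 1 - r / w := by
      field_simp
      ring
    rw [pairExponent, htrue, hfalse, qEntropy_eq_div_log, qEntropy_eq_div_log, binEntropy_one_sub]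
    field_simp
    ring

theorem pow_mul_exp_typeEntropy_le (hq : 2 ≤ q) (hδ : δ ≤ 1) {n : ℕ} (s : Fin n → Bool)
    (hs : ((symbolCount s true + riseCount s : ℕ) : ℝ) < δ * n) :
    ((q - 1 : ℕ) : ℝ) ^ symbolCount s true * exp (typeEntropy s) ≤ (q : ℝ) ^ (kappaSP q δ * n) := by
  set w := symbolCount s true
  set r := riseCount s
  have hqR : (2 : ℝ) ≤ q := by exact_mod_cast hq
  have hq₁ : (0 : ℝ) < q - 1 := by linarith
  have hrw : (r : ℝ) ≤ w := by exact_mod_cast riseCount_le_symbolCount s true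
  have hr : (0 : ℝ) ≤ r := Nat.cast_nonneg r
  push_cast at hs
  have hwrn : (w + r : ℝ) < n := hs.trans_le (mul_le_of_le_one_left (Nat.cast_nonneg n) hδ)
  have hn : (0 : ℝ) < n := by linarith
  have hexponent : pairExponent q (w / n) ((w + r) / n) ≤ kappaSP q δ := by
    refine pairExponent_le_kappaSP hq hδ ?_ ?_ ((div_le_iff₀ hn).mpr hs.le)
    · rw [div_right_comm]
      gcongr
      linarith
    · gcongr
      linarith
  have hentropy : w * log (q - 1) + typeEntropy s =
      pairExponent q (w / n) ((w + r) / n) * n * log q := by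
    rw [pairExponent_mul_log hq hr hrw (by linarith), typeEntropy, Fintype.sum_bool,
      symbolCount_false, Nat.cast_sub (symbolCount_le s true)]
  calc ((q - 1 : ℕ) : ℝ) ^ w * exp (typeEntropy s)
      = exp (w * log (q - 1) + typeEntropy s) := by
        rw [exp_add, exp_nat_mul, exp_log hq₁, Nat.cast_sub (by omega), Nat.cast_one]
    _ ≤ exp (log q * (kappaSP q δ * n)) := by
        rw [hentropy, mul_comm (log _)]
        gcongr
    _ = (q : ℝ) ^ (kappaSP q δ * n) := (rpow_def_of_pos (by linarith) _).symm

end Exponent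

theorem exists_pairwise_not_card_le_mul {X : Type*} [Fintype X] {R : X → X → Prop}
    [DecidableRel R] (hrefl : ∀ x, R x x) (hsymm : ∀ x y, R x y → R y x) {V : ℝ}
    (hV : ∀ c, (#{x | R x c} : ℝ) ≤ V) :
    ∃ C : Finset X, (C : Set X).Pairwise (fun x y => ¬R x y) ∧ (Fintype.card X : ℝ) ≤ #C * V := by
  classical
  obtain ⟨C, hC⟩ := (Set.toFinite
    {C : Finset X | (C : Set X).Pairwise fun x y => ¬R x y}).exists_maximal ⟨∅, by simp⟩
  have hcover : univ ⊆ C.biUnion fun c => {x | R x c} := by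
    intro x _
    by_contra hx
    have hfar : ∀ c ∈ C, ¬R x c := by simpa using hx
    have hinsert : ((insert x C : Finset X) : Set X).Pairwise fun x y => ¬R x y := by
      rw [coe_insert]
      exact hC.prop.insert fun c hc _ => ⟨hfar c hc, fun hcx => hfar c hc (hsymm c x hcx)⟩
    exact hfar x (hC.le_of_ge hinsert (subset_insert x C) (mem_insert_self x C)) (hrefl x)
  refine ⟨C, hC.prop, ?_⟩
  calc (Fintype.card X : ℝ)
      ≤ ∑ c ∈ C, (#{x | R x c} : ℝ) := by exact_mod_cast (card_le_card hcover).trans card_biUnion_le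
    _ ≤ #C * V := by simpa using sum_le_card_nsmul C _ V fun c _ => hV c

theorem tendsto_logb_two_mul_add_one_sq_div (b : ℝ) :
    Filter.Tendsto (fun n : ℕ => logb b (2 * (n + 1) ^ 2) / n) Filter.atTop (nhds 0) := by
  have hlog : Filter.Tendsto (fun n : ℕ => log (n + 1) / n) Filter.atTop (nhds 0) := by
    simpa [Function.comp_def] using (tendsto_pow_log_div_mul_add_atTop 1 (-1) 1 one_ne_zero).comp
      (Filter.tendsto_atTop_add_const_right _ (1 : ℝ) tendsto_natCast_atTop_atTop)
  have hsum := ((tendsto_const_div_atTop_nhds_zero_nat (log 2)).add (hlog.const_mul 2)).div_const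
    (log b)
  simp only [mul_zero, add_zero, zero_div] at hsum
  refine hsum.congr fun n => ?_
  rw [logb, log_mul two_ne_zero (by positivity), log_pow]
  push_cast
  ring

section Codes

variable {F : Type*} [Fintype F] [Nontrivial F] [DecidableEq F] {δ : ℝ} {n : ℕ}

theorem card_pairDist_lt_le (hδ : δ ≤ 1) (y : Fin n → F) :
    (#{x | (pairDist x y : ℝ) < δ * n} : ℝ) ≤
      2 * (n + 1) ^ 2 * (Fintype.card F : ℝ) ^ (kappaSP (Fintype.card F) δ * n) := by
  set B : Finset (Fin n → F) := {x | (pairDist x y : ℝ) < δ * n}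
  set V := (Fintype.card F : ℝ) ^ (kappaSP (Fintype.card F) δ * n)
  have hfiber (τ : ℕ × ℕ) : (#{x ∈ B | cyclicType (diffPattern x y) = τ} : ℝ) ≤ 2 * V := by
    rcases eq_empty_or_nonempty {x ∈ B | cyclicType (diffPattern x y) = τ} with hempty | ⟨x, hx⟩
    · rw [hempty, card_empty, Nat.cast_zero]
      positivity
    · obtain ⟨hxB, rfl⟩ := mem_filter.mp hx
      have hdist : (pairDist x y : ℝ) < δ * n := (mem_filter.mp hxB).2
      rw [pairDist_eq_symbolCount_add_riseCount] at hdist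
      calc (#{z ∈ B | cyclicType (diffPattern z y) = cyclicType (diffPattern x y)} : ℝ)
          ≤ #{z | cyclicType (diffPattern z y) = cyclicType (diffPattern x y)} := by
            gcongr
            exact subset_univ B
        _ ≤ _ := card_cyclicType_diffPattern_eq_le x y
        _ ≤ 2 * V := by
            gcongr
            exact pow_mul_exp_typeEntropy_le Fintype.one_lt_card hδ _ hdist
  calc (#B : ℝ)
      = ∑ τ ∈ range (n + 1) ×ˢ range (n + 1),
          (#{x ∈ B | cyclicType (diffPattern x y) = τ} : ℝ) := by
        exact_mod_cast card_eq_sum_card_fiberwise fun x _ => cyclicType_mem_range_product _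
    _ ≤ #(range (n + 1) ×ˢ range (n + 1)) • (2 * V) := sum_le_card_nsmul _ _ _ fun τ _ => hfiber τ
    _ = 2 * (n + 1) ^ 2 * V := by
        rw [card_product, card_range, nsmul_eq_mul]
        push_cast
        ring

theorem exists_code_rate_ge (hδ₀ : 0 < δ) (hδ₁ : δ ≤ 1) (hn : n ≠ 0) :
    ∃ C : Finset (Fin n → F),
      (∀ x ∈ C, ∀ y ∈ C, x ≠ y → δ * n ≤ (pairDist x y : ℝ)) ∧
      1 - kappaSP (Fintype.card F) δ - logb (Fintype.card F) (2 * (n + 1) ^ 2) / n ≤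
        logb (Fintype.card F) #C / n := by
  set q := Fintype.card F with hq
  set κ := kappaSP q δ
  have hq₁ : (1 : ℝ) < q := by exact_mod_cast (Fintype.one_lt_card : 1 < Fintype.card F)
  have hq₀ : (0 : ℝ) < q := one_pos.trans hq₁
  have hn₀ : (0 : ℝ) < n := by exact_mod_cast Nat.pos_of_ne_zero hn
  obtain ⟨C, hfar, hcard⟩ := exists_pairwise_not_card_le_mul
    (R := fun x y : Fin n → F => (pairDist x y : ℝ) < δ * n)
    (fun x => by simpa [pairDist_self] using mul_pos hδ₀ hn₀)
    (fun x y hxy => by simpa only [pairDist_comm y x] using hxy) (card_pairDist_lt_le hδ₁)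
  refine ⟨C, fun x hx y hy hxy => not_lt.mp (hfar hx hy hxy), ?_⟩
  rw [Fintype.card_fun, Fintype.card_fin, Nat.cast_pow, ← hq] at hcard
  have hC : (#C : ℝ) ≠ 0 := by
    intro hC
    rw [hC, zero_mul] at hcard
    exact (pow_pos hq₀ n).not_ge hcard
  have hlog : (n : ℝ) ≤ logb q #C + (logb q (2 * (n + 1) ^ 2) + κ * n) :=
    calc (n : ℝ) = logb q ((q : ℝ) ^ n) := by rw [logb_pow, logb_self_eq_one hq₁, mul_one]
      _ ≤ logb q (#C * (2 * (n + 1) ^ 2 * (q : ℝ) ^ (κ * n))) :=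
          logb_le_logb_of_le hq₁ (pow_pos hq₀ n) hcard
      _ = _ := by
          rw [logb_mul hC (by positivity), logb_mul (by positivity) (by positivity),
            logb_rpow hq₀ hq₁.ne']
  rw [le_div_iff₀ hn₀, sub_mul, div_mul_cancel₀ _ hn₀.ne']
  linarith

end Codes

end SymbolPair

theorem gilbert_varshamov_pair_general {F : Type*} [Fintype F] [Nontrivial F] [DecidableEq F]
    {δ ε : ℝ} (hδ₀ : 0 < δ) (hδ₁ : δ ≤ 1) (hε : 0 < ε) :
    ∃ n₀ : ℕ, ∀ n : ℕ, n₀ ≤ n → ∃ C : Finset (Fin n → F),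
      (∀ x ∈ C, ∀ y ∈ C, x ≠ y → δ * n ≤ (pairDist x y : ℝ)) ∧
      1 - kappaSP (Fintype.card F) δ - ε ≤ Real.logb (Fintype.card F) C.card / n := by
  have hsmall :=
    (SymbolPair.tendsto_logb_two_mul_add_one_sq_div (Fintype.card F)).eventually_le_const hε
  refine Filter.eventually_atTop.mp ?_
  filter_upwards [hsmall, Filter.eventually_ne_atTop 0] with n hn hn₀
  obtain ⟨C, hdist, hrate⟩ := SymbolPair.exists_code_rate_ge (F := F) hδ₀ hδ₁ hn₀
  exact ⟨C, hdist, (sub_le_sub_left hn _).trans hrate⟩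

/-- (Asymptotic Gilbert–Varshamov bound for symbol-pair codes) For every finite field
`F` of size `q`, every real `δ ∈ (0,1)` with `κ_sp(δ) < 1`, and every `ε > 0`, for all
sufficiently large `n` there exists a code `C ⊆ F_q^n` with minimum pair distance at
least `δn` and rate `(log_q |C|)/n ≥ 1 − κ_sp(δ) − ε`. -/
theorem gilbert_varshamov_pair {F : Type*} [Field F] [Fintype F] [DecidableEq F]
    {q : ℕ} (hq : Fintype.card F = q) (δ ε : ℝ)
    (hδ0 : 0 < δ) (hδ1 : δ < 1) (hκ : kappaSP q δ < 1) (hε : 0 < ε) :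
    ∃ n₀ : ℕ, ∀ n : ℕ, n₀ ≤ n → ∃ C : Finset (Fin n → F),
      (∀ x ∈ C, ∀ y ∈ C, x ≠ y → δ * n ≤ (pairDist x y : ℝ)) ∧
      1 - kappaSP q δ - ε ≤ Real.logb q C.card / n := by
  subst hq
  exact gilbert_varshamov_pair_general hδ0 hδ1.le hε
end

section
/- For every prime power q and every real δ ∈ (0,1), the size of the symbol-pair ball of radius ⌊δn⌋ satisfies lim_{n→∞} (log_q |B_P(0, ⌊δn⌋)|)/n = κ_sp(δ), where 0 denotes the all-zero vector of F_q^n (the size of B_P(x, r) does not depend on the center x, since d_P is translation invariant). -/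
/-- The symbol-pair ball of radius `r` centered at `x`. -/
def pairBall {F : Type*} [Fintype F] [DecidableEq F] {n : ℕ}
    (x : Fin n → F) (r : ℕ) : Finset (Fin n → F) :=
  Finset.univ.filter fun y => pairDist x y ≤ r

/-!
Whether `y` lies in the pair ball around `x` depends only on the binary word marking the positions
where `x` and `y` differ. If this word has `w` ones and `L` places, counted cyclically, where a one
follows a zero, then the pair distance is `w + L`: the misread pairs are those starting at a one
and those ending at the first one of a run. Cutting the cycle open changes `L` by at most one, and
the number of words with given `w` and linear count `L` is exactly
`(w choose L) * (n - w choose L)`. As each word comes from `(q - 1) ^ w` vectors, the size of the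
ball is, up to a factor polynomial in `n`, the largest of the numbers
`(q - 1) ^ w * (w choose L) * (n - w choose L)` with `L ≤ w` and `w + L ≤ δ n`. Up to such factors,
`a choose b` is `exp (a h(b / a))` with `h` the binary entropy, so the exponential rate is the
maximum of a continuous function of `(w / n, L / n)` over a compact triangle; it becomes `κ_sp(δ)`
in the coordinates `β = w / n`, `θ = (w + L) / n`.
-/

open Finset Real Filter Topology

namespace SymbolPair

section BinaryWords

variable {n : ℕ}

/-- The number of ones of a binary word. -/
def weight (s : Fin n → Bool) : ℕ := #{i | s i = true}

/-- The number of positions of the word `s` at which a one follows a zero, where the letter `p` is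
taken to precede `s`. For `p = true`, this is the number of runs of ones in `s` that do not start
at the first letter. -/
def ascents (p : Bool) (s : Fin n → Bool) : ℕ :=
  #{i : Fin n | (Fin.cons p s : Fin (n + 1) → Bool) i.castSucc = false ∧ s i = true}

lemma weight_le (s : Fin n → Bool) : weight s ≤ n :=
  (card_le_univ _).trans_eq (Fintype.card_fin n)

lemma ascents_le_weight (p : Bool) (s : Fin n → Bool) : ascents p s ≤ weight s :=
  card_le_card (monotone_filter_right _ fun _ _ h => h.2)

lemma weight_cons (a : Bool) (s : Fin n → Bool) :
    weight (Fin.cons a s : Fin (n + 1) → Bool) = (if a then 1 else 0) + weight s := by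
  simp only [weight, card_filter, Fin.sum_univ_succ, Fin.cons_zero, Fin.cons_succ]

lemma ascents_cons (p a : Bool) (s : Fin n → Bool) :
    ascents p (Fin.cons a s : Fin (n + 1) → Bool) =
      (if p = false ∧ a = true then 1 else 0) + ascents a s := by
  simp only [ascents, card_filter, Fin.sum_univ_succ, Fin.castSucc_zero, Fin.cons_zero,
    Fin.cons_succ, ← Fin.succ_castSucc]

lemma weight_eq_zero_iff {s : Fin n → Bool} : weight s = 0 ↔ s = fun _ => false := by
  simp [weight, filter_eq_empty_iff, funext_iff]

/-- The binary words of length `n` with `w` ones and, after the letter `p`, `L` ascents. -/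
def words (p : Bool) (n w L : ℕ) : Finset (Fin n → Bool) :=
  {s | weight s = w ∧ ascents p s = L}

lemma card_words_of_lt {p : Bool} {w L : ℕ} (h : n < w) : #(words p n w L) = 0 := by
  rw [card_eq_zero, words, filter_eq_empty_iff]
  rintro s - ⟨hw, -⟩
  exact h.not_ge (hw ▸ weight_le s)

lemma card_words_weight_zero (p : Bool) (n L : ℕ) :
    #(words p n 0 L) = if L = 0 then 1 else 0 := by
  have ascents_zeros : ascents p (fun _ : Fin n => false) = 0 := by simp [ascents]
  have words_eq : words p n 0 L = if L = 0 then {fun _ => false} else ∅ := by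
    ext s
    simp only [words, mem_filter, mem_univ, true_and, weight_eq_zero_iff]
    grind
  rw [words_eq]
  split_ifs <;> rfl

lemma card_words_succ (p : Bool) (n w L : ℕ) :
    #(words p (n + 1) w L) = #(words false n w L) +
      #{s : Fin n → Bool | 1 + weight s = w ∧
        (if p = false then 1 else 0) + ascents true s = L} := by
  simp only [words, card_filter]
  rw [← (Fin.consEquiv fun _ : Fin (n + 1) => Bool).sum_comp, Fintype.sum_prod_type]
  simp [Fin.consEquiv, weight_cons, ascents_cons, add_comm]

lemma card_words_true_succ (n w L : ℕ) :
    #(words true (n + 1) (w + 1) L) = #(words false n (w + 1) L) + #(words true n w L) := by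
  rw [card_words_succ]
  simp [words, add_comm 1]

lemma card_words_false_succ (n w L : ℕ) :
    #(words false (n + 1) (w + 1) (L + 1)) =
      #(words false n (w + 1) (L + 1)) + #(words true n w L) := by
  rw [card_words_succ]
  simp [words, add_comm 1]

lemma card_words_false_ascents_zero (n w : ℕ) : #(words false n (w + 1) 0) = 0 := by
  induction n with
  | zero => exact card_words_of_lt w.succ_pos
  | succ n ih => simp [card_words_succ, ih]

/-- Deleting the first letter relates the two counts, which are proved by simultaneous induction.
The words of the second count have only `z - 1` zeros; there are none of them if `z = 0`. -/
lemma card_words_add (n : ℕ) : ∀ w z L, w + z = n →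
    #(words true n w L) = w.choose L * z.choose L ∧
    #(words false n (w + 1) (L + 1)) = w.choose L * z.choose (L + 1) := by
  induction n with
  | zero =>
    intro w z L h
    obtain ⟨rfl, rfl⟩ : w = 0 ∧ z = 0 := by omega
    rw [card_words_weight_zero, card_words_of_lt (Nat.succ_pos 0)]
    cases L <;> simp
  | succ n ih =>
    intro w z L h
    constructor
    · rcases w with _ | w
      · rw [card_words_weight_zero]
        cases L <;> simp
      · rw [card_words_true_succ, (ih w z L (by omega)).1]
        rcases L with _ | L
        · simp [card_words_false_ascents_zero]
        · rw [(ih w z L (by omega)).2, Nat.choose_succ_succ w L, add_mul]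
    · rcases z with _ | z
      · rw [card_words_of_lt (by omega), Nat.choose_zero_succ, mul_zero]
      · obtain ⟨count_true, count_false⟩ := ih w z L (by omega)
        rw [card_words_false_succ, count_true, count_false, Nat.choose_succ_succ z L]
        ring

lemma card_words_true {w : ℕ} (hw : w ≤ n) (L : ℕ) :
    #(words true n w L) = w.choose L * (n - w).choose L :=
  (card_words_add n w (n - w) L (by omega)).1

end BinaryWords

section PairBall

variable {F : Type*} [DecidableEq F] {n : ℕ}

/-- The binary word marking the positions at which `x` and `y` differ. -/
def diffWord (x y : Fin n → F) : Fin n → Bool := fun i => decide (x i ≠ y i)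

lemma pairDist_eq_weight_add (x y : Fin n → F) :
    pairDist x y = weight (diffWord x y) +
      ∑ i : Fin n, if diffWord x y i = false ∧
        diffWord x y ⟨(i.1 + 1) % n, Nat.mod_lt _ i.pos⟩ = true then 1 else 0 := by
  simp only [pairDist, weight, card_filter, ← sum_add_distrib]
  refine sum_congr rfl fun i _ => ?_
  by_cases h : x i = y i <;> simp [diffWord, h]

lemma pairDist_eq_weight_add_ascents (x y : Fin (n + 1) → F) :
    pairDist x y = weight (diffWord x y) + ascents true (diffWord x y) +
      if diffWord x y (Fin.last n) = false ∧ diffWord x y 0 = true then 1 else 0 := by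
  have next_castSucc (i : Fin n) :
      (⟨(i.castSucc.1 + 1) % (n + 1), Nat.mod_lt _ i.castSucc.pos⟩ : Fin (n + 1)) = i.succ := by
    ext; simp [Nat.mod_eq_of_lt]
  have next_last :
      (⟨((Fin.last n).1 + 1) % (n + 1), Nat.mod_lt _ (Fin.last n).pos⟩ : Fin (n + 1)) = 0 := by
    ext; simp
  rw [pairDist_eq_weight_add, Fin.sum_univ_castSucc, ascents, card_filter, Fin.sum_univ_succ]
  simp only [next_castSucc, next_last]
  simp [add_assoc]

lemma weight_add_ascents_le_pairDist (x y : Fin n → F) :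
    weight (diffWord x y) + ascents true (diffWord x y) ≤ pairDist x y := by
  cases n with
  | zero => simp [weight, ascents]
  | succ n => exact (pairDist_eq_weight_add_ascents x y).ge.trans' le_self_add

lemma pairDist_le_weight_add_ascents_add_one (x y : Fin n → F) :
    pairDist x y ≤ weight (diffWord x y) + ascents true (diffWord x y) + 1 := by
  cases n with
  | zero => simp [pairDist]
  | succ n =>
    rw [pairDist_eq_weight_add_ascents]
    gcongr
    split_ifs <;> simp

variable [Fintype F]

lemma card_diffWord_eq (x : Fin n → F) (s : Fin n → Bool) :
    #{y | diffWord x y = s} = (Fintype.card F - 1) ^ weight s := by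
  have fiber_eq : ({y | diffWord x y = s} : Finset (Fin n → F)) =
      Fintype.piFinset fun i => if s i = true then {x i}ᶜ else {x i} := by
    ext y
    simp only [mem_filter, mem_univ, true_and, funext_iff, Fintype.mem_piFinset]
    refine forall_congr' fun i => ?_
    cases s i <;> simp [diffWord, eq_comm (a := x i)]
  simp only [fiber_eq, Fintype.card_piFinset, apply_ite card, card_compl, card_singleton, prod_ite,
    prod_const, one_pow, mul_one, weight]

/-- The vectors whose set of differences from `x` has `w` elements and, ignoring the wrap-around,
`L` runs not starting at position `0`. -/
def shell (x : Fin n → F) (w L : ℕ) : Finset (Fin n → F) :=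
  {y | weight (diffWord x y) = w ∧ ascents true (diffWord x y) = L}

lemma card_shell (x : Fin n → F) {w : ℕ} (hw : w ≤ n) (L : ℕ) :
    #(shell x w L) = (Fintype.card F - 1) ^ w * (w.choose L * (n - w).choose L) := by
  have maps : (shell x w L : Set (Fin n → F)).MapsTo (diffWord x) (words true n w L) := by
    intro y hy
    simpa [shell, words] using hy
  have card_fiber : ∀ s ∈ words true n w L,
      #{y ∈ shell x w L | diffWord x y = s} = (Fintype.card F - 1) ^ w := by
    intro s hs
    obtain ⟨hsw, hsL⟩ : weight s = w ∧ ascents true s = L := by simpa [words] using hs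
    rw [← hsw, ← card_diffWord_eq x s]
    congr 1
    ext y
    simp only [shell, mem_filter, mem_univ, true_and, and_iff_right_iff_imp]
    rintro rfl
    exact ⟨rfl, hsL⟩
  rw [card_eq_sum_card_fiberwise maps, sum_congr rfl card_fiber, sum_const, smul_eq_mul,
    card_words_true hw, mul_comm]

lemma shell_subset_pairBall (x : Fin n → F) {w L r : ℕ} (h : w + L + 1 ≤ r) :
    shell x w L ⊆ pairBall x r := by
  intro y hy
  obtain ⟨rfl, rfl⟩ : weight (diffWord x y) = w ∧ ascents true (diffWord x y) = L := by
    simpa [shell] using hy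
  simpa [pairBall] using (pairDist_le_weight_add_ascents_add_one x y).trans h

lemma card_pairBall_le_sum (x : Fin n → F) (r : ℕ) :
    #(pairBall x r) ≤ ∑ p ∈ range (n + 1) ×ˢ range (n + 1) with p.2 ≤ p.1 ∧ p.1 + p.2 ≤ r,
      #(shell x p.1 p.2) := by
  have maps : (pairBall x r : Set (Fin n → F)).MapsTo
      (fun y => (weight (diffWord x y), ascents true (diffWord x y)))
      ↑{p ∈ range (n + 1) ×ˢ range (n + 1) | p.2 ≤ p.1 ∧ p.1 + p.2 ≤ r} := by
    intro y hy
    have dist_le : pairDist x y ≤ r := by simpa [pairBall] using hy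
    have := weight_add_ascents_le_pairDist x y
    have := weight_le (diffWord x y)
    have := ascents_le_weight true (diffWord x y)
    simp only [coe_filter, mem_product, mem_range, Set.mem_ofPred_eq]
    omega
  rw [card_eq_sum_card_fiberwise maps]
  gcongr with p
  intro y hy
  simp only [mem_filter, Prod.ext_iff] at hy
  simpa [shell] using hy.2

lemma card_pairBall_pos (x : Fin n → F) (r : ℕ) : 0 < #(pairBall x r) :=
  card_pos.2 ⟨x, by simp [pairBall, pairDist]⟩

end PairBall

section Binomial

lemma choose_mul_pow_self_le (b c : ℕ) :
    (b + c).choose b * (b ^ b * c ^ c) ≤ (b + c) ^ (b + c) := by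
  calc (b + c).choose b * (b ^ b * c ^ c) = b ^ b * c ^ (b + c - b) * (b + c).choose b := by
        rw [Nat.add_sub_cancel_left, mul_comm]
    _ ≤ ∑ k ∈ range (b + c + 1), b ^ k * c ^ (b + c - k) * (b + c).choose k :=
        single_le_sum (f := fun k => b ^ k * c ^ (b + c - k) * (b + c).choose k)
          (fun _ _ => Nat.zero_le _) (mem_range.2 (by omega))
    _ = (b + c) ^ (b + c) := by rw [add_pow]; norm_cast

lemma pow_mul_factorial_le (b k : ℕ) :
    b ^ k * b.factorial ≤ b ^ b * k.factorial := by
  rcases le_total b k with h | h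
  · calc b ^ k * b.factorial = b ^ b * (b.factorial * b ^ (k - b)) := by
          rw [← pow_mul_pow_sub b h]; ring
      _ ≤ b ^ b * k.factorial := by gcongr; exact Nat.factorial_mul_pow_sub_le_factorial h
  · obtain ⟨j, rfl⟩ := Nat.exists_eq_add_of_le h
    calc (k + j) ^ k * (k + j).factorial
        = (k + j) ^ k * (k.factorial * (k + 1).ascFactorial j) := by
          rw [Nat.factorial_mul_ascFactorial]
      _ ≤ (k + j) ^ k * (k.factorial * (k + j) ^ j) := by
          gcongr; exact Nat.ascFactorial_le_pow_add k j
      _ = (k + j) ^ (k + j) * k.factorial := by ring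

/-- The largest term in the binomial expansion of `(b + c) ^ (b + c)` is the one of index `b`. -/
lemma pow_mul_pow_mul_choose_le {b c k j : ℕ} (h : k + j = b + c) :
    b ^ k * c ^ j * (k + j).choose k ≤ b ^ b * c ^ c * (b + c).choose b := by
  have pos : 0 < (k.factorial * j.factorial) * (b.factorial * c.factorial) := by positivity
  refine Nat.le_of_mul_le_mul_right ?_ pos
  calc b ^ k * c ^ j * (k + j).choose k *
        (k.factorial * j.factorial * (b.factorial * c.factorial))
      = (b ^ k * b.factorial) * (c ^ j * c.factorial) *
          ((k + j).choose k * k.factorial * j.factorial) := by ring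
    _ ≤ (b ^ b * k.factorial) * (c ^ c * j.factorial) *
          ((b + c).choose b * b.factorial * c.factorial) := by
        rw [Nat.choose_symm_add, Nat.add_choose_mul_factorial_mul_factorial, Nat.choose_symm_add,
          Nat.add_choose_mul_factorial_mul_factorial, h]
        gcongr ?_ * ?_ * _ <;> exact pow_mul_factorial_le _ _
    _ = _ := by ring

lemma pow_self_le_choose (b c : ℕ) :
    (b + c) ^ (b + c) ≤ (b + c + 1) * ((b + c).choose b * (b ^ b * c ^ c)) := by
  calc (b + c) ^ (b + c) = ∑ k ∈ range (b + c + 1), b ^ k * c ^ (b + c - k) * (b + c).choose k := by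
        rw [add_pow]; norm_cast
    _ ≤ ∑ _k ∈ range (b + c + 1), b ^ b * c ^ c * (b + c).choose b := by
        refine sum_le_sum fun k hk => ?_
        have index_add : k + (b + c - k) = b + c := by rw [mem_range] at hk; omega
        simpa only [index_add] using pow_mul_pow_mul_choose_le index_add
    _ = (b + c + 1) * ((b + c).choose b * (b ^ b * c ^ c)) := by
        rw [sum_const, card_range, smul_eq_mul]; ring

end Binomial

section Entropy

/-- The homogeneous form `a h(b / a)` of the binary entropy `h`, in nats. This expression for it is
continuous also at `a = 0`. -/
noncomputable def homEntropy (a b : ℝ) : ℝ := negMulLog b + negMulLog (a - b) - negMulLog a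

lemma homEntropy_sub_right (a b : ℝ) : homEntropy a (a - b) = homEntropy a b := by
  rw [homEntropy, homEntropy, sub_sub_cancel, add_comm (negMulLog b)]

lemma homEntropy_mul (c a b : ℝ) : homEntropy (c * a) (c * b) = c * homEntropy a b := by
  simp only [homEntropy, ← mul_sub, negMulLog_mul]
  ring

lemma mul_binEntropy_div {a b : ℝ} (h : a = 0 → b = 0) :
    a * binEntropy (b / a) = homEntropy a b := by
  rcases eq_or_ne a 0 with rfl | ha
  · simp [homEntropy, h rfl]
  · have binEntropy_eq : binEntropy (b / a) = homEntropy 1 (b / a) := by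
      simp [homEntropy, binEntropy_eq_negMulLog_add_negMulLog_one_sub]
    rw [binEntropy_eq, ← homEntropy_mul, mul_one, mul_div_cancel₀ _ ha]

lemma exp_homEntropy_mul (b c : ℕ) :
    exp (homEntropy (b + c : ℕ) b) * ((b : ℝ) ^ b * (c : ℝ) ^ c) = ((b + c : ℕ) : ℝ) ^ (b + c) := by
  have pow_self (k : ℕ) : (k : ℝ) ^ k = exp (-negMulLog k) := by
    rcases eq_or_ne k 0 with rfl | hk
    · simp
    · rw [negMulLog_eq_neg, neg_neg, exp_nat_mul, exp_log (by positivity)]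
  have sub_eq : ((b + c : ℕ) : ℝ) - b = c := by push_cast; ring
  rw [pow_self b, pow_self c, pow_self (b + c), ← exp_add, ← exp_add, homEntropy, sub_eq]
  ring_nf

variable {a b : ℕ}

lemma choose_le_exp_homEntropy (h : b ≤ a) : (a.choose b : ℝ) ≤ exp (homEntropy a b) := by
  obtain ⟨c, rfl⟩ := Nat.exists_eq_add_of_le h
  have pos : (0 : ℝ) < (b : ℝ) ^ b * (c : ℝ) ^ c := by
    exact_mod_cast mul_pos Nat.pow_self_pos Nat.pow_self_pos
  refine le_of_mul_le_mul_right ?_ pos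
  rw [exp_homEntropy_mul]
  exact_mod_cast choose_mul_pow_self_le b c

lemma exp_homEntropy_le_choose (h : b ≤ a) :
    exp (homEntropy a b) ≤ (a + 1) * a.choose b := by
  obtain ⟨c, rfl⟩ := Nat.exists_eq_add_of_le h
  have pos : (0 : ℝ) < (b : ℝ) ^ b * (c : ℝ) ^ c := by
    exact_mod_cast mul_pos Nat.pow_self_pos Nat.pow_self_pos
  refine le_of_mul_le_mul_right ?_ pos
  rw [exp_homEntropy_mul, mul_assoc]
  exact_mod_cast pow_self_le_choose b c

end Entropy

section Rate

/-- The exponential rate, in nats, of `(q - 1) ^ w * (w choose L) * (n - w choose L)` along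
`(w / n, L / n) → p`. -/
noncomputable def rate (q : ℕ) (p : ℝ × ℝ) : ℝ :=
  p.1 * log (q - 1) + homEntropy p.1 p.2 + homEntropy (1 - p.1) p.2

lemma continuous_rate (q : ℕ) : Continuous (rate q) := by
  unfold rate homEntropy
  fun_prop

lemma exp_natCast_mul_rate {q n w L : ℕ} (hq : 1 < q) (hw : w ≤ n) (hL : L ≤ n) :
    exp (n * rate q (w / n, L / n)) =
      ((q - 1 : ℕ) : ℝ) ^ w * (exp (homEntropy w L) * exp (homEntropy (n - w : ℕ) L)) := by
  have mul_div_self {k : ℕ} (hk : k ≤ n) : (n : ℝ) * (k / n) = k :=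
    mul_div_cancel_of_imp' fun hn => by
      rw [Nat.cast_eq_zero] at hn
      simpa [hn] using hk
  have mul_rate : n * rate q (w / n, L / n) =
      w * log (q - 1) + (homEntropy w L + homEntropy (n - w : ℕ) L) := by
    rw [rate, mul_add, mul_add, ← homEntropy_mul, ← homEntropy_mul, mul_sub, mul_one, ← mul_assoc,
      mul_div_self hw, mul_div_self hL, Nat.cast_sub hw, add_assoc]
  have pred_pos : (0 : ℝ) < q - 1 := sub_pos.2 (by exact_mod_cast hq)
  rw [mul_rate, exp_add, exp_add, exp_nat_mul, exp_log pred_pos, Nat.cast_pred (by omega)]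

/-- The pairs `(β, θ - β)` with `0 ≤ θ / 2 ≤ β ≤ θ ≤ δ`, which are the limits of `(w / n, L / n)`
for `L ≤ w` and `w + L ≤ δ n`. -/
def region (δ : ℝ) : Set (ℝ × ℝ) := {p | 0 ≤ p.2 ∧ p.2 ≤ p.1 ∧ p.1 + p.2 ≤ δ}

lemma isCompact_region (δ : ℝ) : IsCompact (region δ) := by
  refine (isCompact_Icc (a := ((0 : ℝ), (0 : ℝ))) (b := (δ, δ))).of_isClosed_subset ?_ ?_
  · exact (isClosed_le continuous_const continuous_snd).inter
      ((isClosed_le continuous_snd continuous_fst).inter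
        (isClosed_le (continuous_fst.add continuous_snd) continuous_const))
  · rintro ⟨β, τ⟩ ⟨hτ0 : 0 ≤ τ, hτβ : τ ≤ β, hδτ : β + τ ≤ δ⟩
    exact ⟨⟨by linarith, hτ0⟩, ⟨by linarith, by linarith⟩⟩

lemma mul_qEntropy_div (q : ℕ) {a x : ℝ} (h : a = 0 → x = 0) :
    a * qEntropy q (x / a) = (x * log (q - 1) + homEntropy a x) / log q := by
  have qEntropy_eq : qEntropy q (x / a) = (x / a * log (q - 1) + binEntropy (x / a)) / log q := by
    rw [qEntropy, binEntropy_eq_negMulLog_add_negMulLog_one_sub]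
    simp only [logb, negMulLog]
    ring
  rw [qEntropy_eq, ← mul_div_assoc, mul_add, ← mul_assoc, mul_div_cancel_of_imp' h,
    mul_binEntropy_div h]

lemma qEntropy_add_qEntropy_eq_rate (q : ℕ) {β θ : ℝ} (hβ : β = 0 → θ = 0) (hβ' : β = 1 → θ = 1) :
    β * qEntropy q ((2 * β - θ) / β) + (1 - β) * qEntropy q ((θ - β) / (1 - β)) =
      rate q (β, θ - β) / log q := by
  rw [mul_qEntropy_div q (a := β) (by grind), mul_qEntropy_div q (a := 1 - β) (by grind),
    show 2 * β - θ = β - (θ - β) by ring, homEntropy_sub_right, rate]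
  ring

lemma kappaSP_eq_sSup_image (q : ℕ) {δ : ℝ} (hδ1 : δ ≤ 1) :
    kappaSP q δ = sSup ((fun p => rate q p / log q) '' region δ) := by
  rw [kappaSP]
  congr 1
  ext y
  constructor
  · rintro ⟨β, θ, hθ0, hθβ, hβθ, hθδ, rfl⟩
    exact ⟨(β, θ - β), ⟨by simpa, by dsimp only; linarith, by simpa⟩,
      (qEntropy_add_qEntropy_eq_rate q (by grind) (by grind)).symm⟩
  · rintro ⟨⟨β, τ⟩, ⟨hτ0 : 0 ≤ τ, hτβ : τ ≤ β, hδτ : β + τ ≤ δ⟩, rfl⟩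
    refine ⟨β, β + τ, by linarith, by linarith, by linarith, hδτ, ?_⟩
    rw [qEntropy_add_qEntropy_eq_rate q (by grind) (by grind), add_sub_cancel_left]

lemma exists_isMaxOn_rate_kappaSP_eq {q : ℕ} (hq : 1 < q) {δ : ℝ} (hδ0 : 0 ≤ δ) (hδ1 : δ ≤ 1) :
    ∃ p ∈ region δ, IsMaxOn (rate q) (region δ) p ∧ kappaSP q δ = rate q p / log q := by
  have log_pos : 0 < log q := Real.log_pos (by exact_mod_cast hq)
  obtain ⟨p, hp, hmax⟩ := (isCompact_region δ).exists_isMaxOn ⟨(0, 0), by simpa [region]⟩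
    (continuous_rate q).continuousOn
  refine ⟨p, hp, hmax, ?_⟩
  rw [kappaSP_eq_sSup_image q hδ1]
  refine IsGreatest.csSup_eq ⟨⟨p, hp, rfl⟩, ?_⟩
  rintro _ ⟨p', hp', rfl⟩
  exact div_le_div_of_nonneg_right (hmax hp') log_pos.le

end Rate

section Limits

lemma tendsto_log_add_one_div_atTop :
    Tendsto (fun n : ℕ => log (n + 1) / n) atTop (𝓝 0) := by
  have shift : Tendsto (fun n : ℕ => (n : ℝ) + 1) atTop atTop :=
    tendsto_atTop_add_const_right _ _ tendsto_natCast_atTop_atTop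
  simpa [Function.comp_def] using (tendsto_pow_log_div_mul_add_atTop 1 (-1) 1 one_ne_zero).comp
    shift

lemma natFloor_mul_le {δ : ℝ} (hδ : δ ≤ 1) (n : ℕ) : ⌊δ * n⌋₊ ≤ n :=
  Nat.floor_le_of_le (mul_le_of_le_one_left n.cast_nonneg hδ)

lemma tendsto_natFloor_mul_sub_one_div_atTop {b : ℝ} (hb : 0 ≤ b) :
    Tendsto (fun n : ℕ => ((⌊b * n⌋₊ - 1 : ℕ) : ℝ) / n) atTop (𝓝 b) := by
  have floor_div : Tendsto (fun n : ℕ => (⌊b * n⌋₊ : ℝ) / n) atTop (𝓝 b) :=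
    (tendsto_nat_floor_mul_div_atTop hb).comp tendsto_natCast_atTop_atTop
  have lower : Tendsto (fun n : ℕ => (⌊b * n⌋₊ : ℝ) / n - 1 / n) atTop (𝓝 b) := by
    simpa using floor_div.sub tendsto_one_div_atTop_nhds_zero_nat
  refine tendsto_of_tendsto_of_tendsto_of_le_of_le lower floor_div (fun n => ?_) (fun n => ?_)
  · dsimp only
    rw [← sub_div]
    gcongr
    rw [sub_le_iff_le_add]
    exact_mod_cast le_tsub_add
  · dsimp only
    gcongr
    exact Nat.sub_le _ _

end Limits

section BallVolume

variable {F : Type*} [Fintype F] [DecidableEq F] [Nontrivial F] {n : ℕ}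

lemma card_shell_le_exp (x : Fin n → F) {w L : ℕ} (hL : L ≤ w) (hwL : w + L ≤ n) :
    (#(shell x w L) : ℝ) ≤ exp (n * rate (Fintype.card F) (w / n, L / n)) := by
  rw [card_shell x (by omega), exp_natCast_mul_rate Fintype.one_lt_card (by omega) (by omega)]
  push_cast
  gcongr <;> exact choose_le_exp_homEntropy (by omega)

lemma exp_le_card_shell (x : Fin n → F) {w L : ℕ} (hL : L ≤ w) (hwL : w + L ≤ n) :
    exp (n * rate (Fintype.card F) (w / n, L / n)) ≤ (n + 1) ^ 2 * #(shell x w L) := by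
  have exp_le {a : ℕ} (hLa : L ≤ a) (han : a ≤ n) :
      exp (homEntropy a L) ≤ (n + 1) * a.choose L :=
    (exp_homEntropy_le_choose hLa).trans (by gcongr)
  rw [card_shell x (by omega), exp_natCast_mul_rate Fintype.one_lt_card (by omega) (by omega)]
  calc _ ≤ ((Fintype.card F - 1 : ℕ) : ℝ) ^ w *
          (((n + 1) * w.choose L) * ((n + 1) * (n - w).choose L)) := by
        gcongr <;> exact exp_le (by omega) (by omega)
    _ = _ := by push_cast; ring

lemma div_mem_region {δ : ℝ} {w L : ℕ} (hn : n ≠ 0) (hL : L ≤ w) (hwL : (w + L : ℕ) ≤ δ * n) :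
    ((w : ℝ) / n, (L : ℝ) / n) ∈ region δ := by
  refine ⟨by positivity, by dsimp only; gcongr, ?_⟩
  rw [← add_div, div_le_iff₀ (by positivity)]
  exact_mod_cast hwL

lemma card_pairBall_le_exp (hn : n ≠ 0) (x : Fin n → F) {r : ℕ} (hr : r ≤ n) {δ : ℝ}
    (hrδ : r ≤ δ * n) {M : ℝ} (hM : ∀ p ∈ region δ, rate (Fintype.card F) p ≤ M) :
    (#(pairBall x r) : ℝ) ≤ (n + 1) ^ 2 * exp (n * M) := by
  have shell_le : ∀ p ∈ {p ∈ range (n + 1) ×ˢ range (n + 1) | p.2 ≤ p.1 ∧ p.1 + p.2 ≤ r},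
      (#(shell x p.1 p.2) : ℝ) ≤ exp (n * M) := by
    rintro ⟨w, L⟩ hp
    obtain ⟨-, hL : L ≤ w, hwL : w + L ≤ r⟩ := mem_filter.1 hp
    refine (card_shell_le_exp x hL (hwL.trans hr)).trans ?_
    gcongr
    exact hM _ (div_mem_region hn hL (hrδ.trans' (by exact_mod_cast hwL)))
  calc (#(pairBall x r) : ℝ)
      ≤ ∑ p ∈ range (n + 1) ×ˢ range (n + 1) with p.2 ≤ p.1 ∧ p.1 + p.2 ≤ r,
          (#(shell x p.1 p.2) : ℝ) := by exact_mod_cast card_pairBall_le_sum x r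
    _ ≤ #{p ∈ range (n + 1) ×ˢ range (n + 1) | p.2 ≤ p.1 ∧ p.1 + p.2 ≤ r} • exp (n * M) :=
        sum_le_card_nsmul _ _ _ shell_le
    _ ≤ #(range (n + 1) ×ˢ range (n + 1)) • exp (n * M) := by
        gcongr
        exact filter_subset _ _
    _ = (n + 1) ^ 2 * exp (n * M) := by simp [sq]

lemma log_card_pairBall_div_le (hn : n ≠ 0) (x : Fin n → F) {r : ℕ} (hr : r ≤ n) {δ : ℝ}
    (hrδ : r ≤ δ * n) {M : ℝ} (hM : ∀ p ∈ region δ, rate (Fintype.card F) p ≤ M) :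
    log #(pairBall x r) / n ≤ M + 2 * (log (n + 1) / n) := by
  have card_pos : (0 : ℝ) < #(pairBall x r) := by exact_mod_cast card_pairBall_pos x r
  calc log #(pairBall x r) / n ≤ log ((n + 1) ^ 2 * exp (n * M)) / n := by
        gcongr
        exact card_pairBall_le_exp hn x hr hrδ hM
    _ = M + 2 * (log (n + 1) / n) := by
        rw [log_mul (by positivity) (exp_ne_zero _), log_pow, log_exp]
        field_simp
        push_cast
        ring

lemma rate_sub_le_log_card_pairBall_div (hn : n ≠ 0) (x : Fin n → F) {w L r : ℕ} (hL : L ≤ w)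
    (hwL : w + L ≤ n) (hr : w + L + 1 ≤ r) :
    rate (Fintype.card F) (w / n, L / n) - 2 * (log (n + 1) / n) ≤ log #(pairBall x r) / n := by
  have card_pos : (0 : ℝ) < #(pairBall x r) := by exact_mod_cast card_pairBall_pos x r
  have exp_le : exp (n * rate (Fintype.card F) (w / n, L / n)) ≤ (n + 1) ^ 2 * #(pairBall x r) :=
    (exp_le_card_shell x hL hwL).trans (by gcongr; exact shell_subset_pairBall x hr)
  rw [sub_le_iff_le_add]
  calc rate (Fintype.card F) (w / n, L / n)
      = log (exp (n * rate (Fintype.card F) (w / n, L / n))) / n := by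
        rw [log_exp, mul_div_cancel_left₀ _ (by positivity)]
    _ ≤ log ((n + 1) ^ 2 * #(pairBall x r)) / n := by gcongr
    _ = log #(pairBall x r) / n + 2 * (log (n + 1) / n) := by
        rw [log_mul (by positivity) card_pos.ne', log_pow]
        push_cast
        ring

/-- Taking `⌊β n⌋ - 1` differences leaves room in the radius for the pair that wraps around; the
number of runs is lowered with it to stay below the number of differences. -/
lemma eventually_rate_sub_le_log_card_pairBall_div (x : ∀ n, Fin n → F) {δ : ℝ} (hδ0 : 0 < δ)
    (hδ1 : δ ≤ 1) {β τ : ℝ} (hp : (β, τ) ∈ region δ) :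
    ∀ᶠ n : ℕ in atTop, rate (Fintype.card F)
        ((⌊β * n⌋₊ - 1 : ℕ) / n, (⌊τ * n⌋₊ - 1 : ℕ) / n) - 2 * (log (n + 1) / n) ≤
      log #(pairBall (x n) ⌊δ * n⌋₊) / n := by
  obtain ⟨hτ0 : 0 ≤ τ, hτβ : τ ≤ β, hδ : β + τ ≤ δ⟩ := hp
  have hβ0 : 0 ≤ β := hτ0.trans hτβ
  have one_le_radius : ∀ᶠ n : ℕ in atTop, 1 ≤ ⌊δ * n⌋₊ :=
    (tendsto_nat_floor_atTop.comp
      (tendsto_natCast_atTop_atTop.const_mul_atTop hδ0)).eventually_ge_atTop 1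
  filter_upwards [one_le_radius, eventually_ne_atTop 0] with n hr hn
  have radius_le : ⌊δ * n⌋₊ ≤ n := natFloor_mul_le hδ1 n
  have floor_le_floor : ⌊τ * n⌋₊ ≤ ⌊β * n⌋₊ := by gcongr
  have floor_add_floor_le : ⌊β * n⌋₊ + ⌊τ * n⌋₊ ≤ ⌊δ * n⌋₊ := by
    refine Nat.le_floor ?_
    calc ((⌊β * n⌋₊ + ⌊τ * n⌋₊ : ℕ) : ℝ) ≤ β * n + τ * n := by
          push_cast
          gcongr <;> exact Nat.floor_le (by positivity)
      _ ≤ δ * n := by rw [← add_mul]; gcongr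
  exact rate_sub_le_log_card_pairBall_div hn (x n) (by omega) (by omega) (by omega)

end BallVolume

end SymbolPair

open SymbolPair

theorem pairBall_card_limit_general {F : Type*} [Fintype F] [DecidableEq F] [Nontrivial F]
    {q : ℕ} (hq : Fintype.card F = q) {δ : ℝ} (hδ0 : 0 < δ) (hδ1 : δ ≤ 1) (x : ∀ n, Fin n → F) :
    Tendsto (fun n : ℕ => logb q #(pairBall (x n) ⌊δ * n⌋₊) / n) atTop (𝓝 (kappaSP q δ)) := by
  subst hq
  obtain ⟨⟨β, τ⟩, hp, hmax, kappaSP_eq⟩ :=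
    exists_isMaxOn_rate_kappaSP_eq (Fintype.one_lt_card (α := F)) hδ0.le hδ1
  suffices Tendsto (fun n : ℕ => log #(pairBall (x n) ⌊δ * n⌋₊) / n) atTop
      (𝓝 (rate (Fintype.card F) (β, τ))) by
    simpa only [kappaSP_eq, logb, div_right_comm] using this.div_const (log (Fintype.card F))
  have error_tendsto : Tendsto (fun n : ℕ => 2 * (log (n + 1) / n)) atTop (𝓝 0) := by
    simpa using tendsto_log_add_one_div_atTop.const_mul 2
  have lower_tendsto := (((continuous_rate (Fintype.card F)).tendsto (β, τ)).comp
    ((tendsto_natFloor_mul_sub_one_div_atTop (hp.1.trans hp.2.1)).prodMk_nhds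
      (tendsto_natFloor_mul_sub_one_div_atTop hp.1))).sub error_tendsto
  have upper_tendsto := error_tendsto.const_add (rate (Fintype.card F) (β, τ))
  rw [sub_zero] at lower_tendsto
  rw [add_zero] at upper_tendsto
  refine tendsto_of_tendsto_of_tendsto_of_le_of_le' lower_tendsto upper_tendsto
    (eventually_rate_sub_le_log_card_pairBall_div x hδ0 hδ1 hp) ?_
  filter_upwards [eventually_ne_atTop 0] with n hn
  exact log_card_pairBall_div_le hn (x n) (natFloor_mul_le hδ1 n)
    (Nat.floor_le (by positivity)) hmax

/-- For every finite field `F` of size `q` and every real `δ ∈ (0,1)`,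
`lim_{n→∞} (log_q |B_P(0, ⌊δn⌋)|)/n = κ_sp(δ)`. -/
theorem pairBall_card_limit {F : Type*} [Field F] [Fintype F] [DecidableEq F]
    {q : ℕ} (hq : Fintype.card F = q) (δ : ℝ) (hδ0 : 0 < δ) (hδ1 : δ < 1) :
    Filter.Tendsto
      (fun n : ℕ =>
        Real.logb q ((pairBall (0 : Fin n → F) ⌊δ * n⌋₊).card) / n)
      Filter.atTop (nhds (kappaSP q δ)) :=
  pairBall_card_limit_general hq hδ0 hδ1.le fun _ => 0
end

section
/- Let q be a prime power, γ a primitive element of F_q, and let k, n be integers with 1 ≤ k ≤ n − 2 and n ≤ q − 1. Consider the folded Reed–Solomon code FRS[n−1, k] ⊆ (F_q × F_q)^{n−1}, whose codeword for a polynomial f ∈ F_q[x] of degree at most k−1 is the length-(n−1) vector ((f(γ^{i−1}), f(γ^i)))_{i=1,…,n−1}. Then for every received word b ∈ (F_q × F_q)^{n−1}, the number of polynomials f of degree at most k−1 whose codeword differs from b in at most τ(n−1) coordinates is at most q, where τ = (2/3)·(n−2−k)/(n−1). That is, FRS[n−1,k] is (τ(n−1), q)-list decodable in the Hamming metric over the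 alphabet F_q × F_q. -/
/-!
A linear polynomial `Q(X, Y, Z) = A₀(X) + A₁(X) Y + A₂(X) Z` has more coefficients than there are
received symbols, so a nonzero `Q` of small degree vanishes at every `(γ ^ i, b i)`. If the codeword
of `f` agrees with `b` often enough, then `Q(X, f(X), f(γX))` has more roots than its degree, so it
is zero. The difference `g` of two solutions satisfies `A₁ g + A₂ g(γX) = 0`; comparing leading
coefficients determines `γ ^ deg g`, hence `deg g =: m`. So solutions are separated by their `m`-th
coefficient, and there are at most `q` of them.
-/

open Polynomial

section Interpolation

variable {F ι κ : Type*} [Field F] [Fintype ι] [Fintype κ]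

theorem exists_ne_zero_degree_lt_sum_eval_mul_eq_zero (x : ι → F) (w : ι → κ → F) (d : κ → ℕ)
    (hd : Fintype.card ι < ∑ j, d j) :
    ∃ A : κ → F[X], A ≠ 0 ∧ (∀ j, (A j).degree < d j) ∧ ∀ i, ∑ j, (A j).eval (x i) * w i j = 0 := by
  let weightedEval : (∀ j, degreeLT F (d j)) →ₗ[F] ι → F :=
    LinearMap.pi fun i ↦ ∑ j, w i j • leval (x i) ∘ₗ (degreeLT F (d j)).subtype ∘ₗ LinearMap.proj j
  have finrank_degreeLT (m : ℕ) : Module.finrank F (degreeLT F m) = m := by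
    simpa using (degreeLTEquiv F m).finrank_eq
  have ker_ne_bot : LinearMap.ker weightedEval ≠ ⊥ := by
    apply LinearMap.ker_ne_bot_of_finrank_lt
    rwa [Module.finrank_fintype_fun_eq_card, Module.finrank_pi_fintype,
      Finset.sum_congr rfl fun j _ ↦ finrank_degreeLT (d j)]
  obtain ⟨A, hA, hA0⟩ := Submodule.exists_mem_ne_zero_of_ne_bot ker_ne_bot
  refine ⟨fun j ↦ A j, fun h ↦ hA0 ?_, fun j ↦ mem_degreeLT.1 (A j).2, fun i ↦ ?_⟩
  · exact funext fun j ↦ Subtype.ext (congrFun h j)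
  · simpa [weightedEval, leval, mul_comm] using congrFun (LinearMap.mem_ker.1 hA) i

theorem exists_linear_interpolant (x : ι → F) (b : ι → F × F) {D k : ℕ}
    (h : Fintype.card ι < 3 * D + k + 2) :
    ∃ A : Fin 3 → F[X], A ≠ 0 ∧
      (A 0).degree < ((D + k : ℕ) : WithBot ℕ) ∧ (A 1).degree ≤ D ∧ (A 2).degree ≤ D ∧
      ∀ i, (A 0).eval (x i) + (A 1).eval (x i) * (b i).1 + (A 2).eval (x i) * (b i).2 = 0 := by
  obtain ⟨A, hA, hdeg, hA_eval⟩ := exists_ne_zero_degree_lt_sum_eval_mul_eq_zero x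
    (fun i ↦ ![1, (b i).1, (b i).2]) ![D + k, D + 1, D + 1]
    (by simp only [Fin.sum_univ_three, Matrix.cons_val]; omega)
  refine ⟨A, hA, hdeg 0, ?_, ?_, fun i ↦ by simpa [Fin.sum_univ_three] using hA_eval i⟩
  · exact Order.lt_succ_iff.1 (hdeg 1)
  · exact Order.lt_succ_iff.1 (hdeg 2)

end Interpolation

section Dilation

theorem degree_comp_C_mul_X_le {R : Type*} [CommSemiring R] (γ : R) (p : R[X]) :
    (p.comp (C γ * X)).degree ≤ p.degree := by
  rw [degree_le_iff_coeff_zero]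
  intro m hm
  rw [comp_C_mul_X_coeff, coeff_eq_zero_of_degree_lt hm, zero_mul]

variable {R : Type*} [CommRing R] [IsDomain R] {γ : R} {a c g h : R[X]}

theorem leadingCoeff_comp_C_mul_X (hγ : γ ≠ 0) (p : R[X]) :
    (p.comp (C γ * X)).leadingCoeff = p.leadingCoeff * γ ^ p.natDegree := by
  have natDegree_ne_zero : (C γ * X).natDegree ≠ 0 := by simp [natDegree_C_mul_X γ hγ]
  rw [leadingCoeff_comp natDegree_ne_zero, leadingCoeff_C_mul_X]

theorem leadingCoeff_add_mul_pow_natDegree_eq_zero (hγ : γ ≠ 0) (hg : g ≠ 0)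
    (h : a * g + c * g.comp (C γ * X) = 0) :
    a.leadingCoeff + c.leadingCoeff * γ ^ g.natDegree = 0 := by
  have leadingCoeffs := congrArg leadingCoeff (eq_neg_of_add_eq_zero_left h)
  rw [leadingCoeff_neg, leadingCoeff_mul, leadingCoeff_mul, leadingCoeff_comp_C_mul_X hγ]
    at leadingCoeffs
  apply mul_right_cancel₀ (leadingCoeff_ne_zero.2 hg)
  linear_combination leadingCoeffs

theorem natDegree_eq_of_mul_add_mul_comp_eq_zero (hac : a ≠ 0 ∨ c ≠ 0)
    (hg : g ≠ 0) (hh : h ≠ 0) (hgγ : g.natDegree < orderOf γ) (hhγ : h.natDegree < orderOf γ)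
    (eqg : a * g + c * g.comp (C γ * X) = 0) (eqh : a * h + c * h.comp (C γ * X) = 0) :
    g.natDegree = h.natDegree := by
  have hγ : γ ≠ 0 := by
    rintro rfl
    simp at hgγ
  have lcg := leadingCoeff_add_mul_pow_natDegree_eq_zero hγ hg eqg
  have lch := leadingCoeff_add_mul_pow_natDegree_eq_zero hγ hh eqh
  have hc : c.leadingCoeff ≠ 0 := by
    intro hc
    simp only [hc, zero_mul, add_zero, leadingCoeff_eq_zero] at lcg
    exact hac.elim (· lcg) (· (leadingCoeff_eq_zero.1 hc))
  exact pow_injOn_Iio_orderOf hgγ hhγ (mul_left_cancel₀ hc (by linear_combination lcg - lch))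

end Dilation

/-- The polynomial `Q(X, f(X), f(γX))` for `Q(X, Y, Z) = A 0 + A 1 * Y + A 2 * Z`, where `Q` is
represented by its coefficients in `R[X]`. Its vanishing is the equation solved by every `f` in the
decoded list. -/
noncomputable def dilationSubst {R : Type*} [CommSemiring R] (γ : R) (A : Fin 3 → R[X])
    (f : R[X]) : R[X] :=
  A 0 + A 1 * f + A 2 * f.comp (C γ * X)

section DilationSubst

theorem eval_dilationSubst {R : Type*} [CommSemiring R] (γ x : R) (A : Fin 3 → R[X]) (f : R[X]) :
    (dilationSubst γ A f).eval x =
      (A 0).eval x + (A 1).eval x * f.eval x + (A 2).eval x * f.eval (γ * x) := by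
  simp [dilationSubst]

theorem degree_dilationSubst_lt {R : Type*} [CommSemiring R] (γ : R) {A : Fin 3 → R[X]} {f : R[X]}
    {D k : ℕ} (h0 : (A 0).degree < ((D + k : ℕ) : WithBot ℕ)) (h1 : (A 1).degree ≤ D)
    (h2 : (A 2).degree ≤ D) (hf : f.degree < k) :
    (dilationSubst γ A f).degree < ((D + k : ℕ) : WithBot ℕ) := by
  have degree_mul_lt {a p : R[X]} (ha : a.degree ≤ D) (hp : p.degree < k) :
      (a * p).degree < ((D + k : ℕ) : WithBot ℕ) :=
    (degree_mul_le_of_le ha le_rfl).trans_lt <| by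
      push_cast
      exact WithBot.add_lt_add_left (WithBot.natCast_ne_bot D) hp
  have hfγ : (f.comp (C γ * X)).degree < k := (degree_comp_C_mul_X_le γ f).trans_lt hf
  exact mem_degreeLT.1 <| add_mem
    (add_mem (mem_degreeLT.2 h0) (mem_degreeLT.2 (degree_mul_lt h1 hf)))
    (mem_degreeLT.2 (degree_mul_lt h2 hfγ))

variable {R : Type*} [CommRing R]

theorem dilationSubst_sub_dilationSubst (γ : R) (A : Fin 3 → R[X]) (f g : R[X]) :
    dilationSubst γ A f - dilationSubst γ A g =
      A 1 * (f - g) + A 2 * (f - g).comp (C γ * X) := by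
  rw [dilationSubst, dilationSubst, sub_comp]
  ring

theorem ne_zero_or_ne_zero_of_dilationSubst_eq_zero {γ : R} {A : Fin 3 → R[X]} {f : R[X]}
    (hA : A ≠ 0) (hf : dilationSubst γ A f = 0) : A 1 ≠ 0 ∨ A 2 ≠ 0 := by
  by_contra! h
  have hA0 : A 0 = 0 := by simpa [dilationSubst, h] using hf
  apply hA
  ext1 j
  fin_cases j
  exacts [hA0, h.1, h.2]

theorem exists_injOn_coeff_dilationSubst_eq_zero [IsDomain R] (γ : R) {A : Fin 3 → R[X]}
    (hA : A ≠ 0) :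
    ∃ m, Set.InjOn (coeff · m) {f | f.natDegree < orderOf γ ∧ dilationSubst γ A f = 0} := by
  set S := {f | f.natDegree < orderOf γ ∧ dilationSubst γ A f = 0}
  obtain hS | ⟨f, hf, g, hg, hfg⟩ := S.subsingleton_or_nontrivial
  · exact ⟨0, hS.injOn _⟩
  have natDegree_sub_lt {u v : R[X]} (hu : u ∈ S) (hv : v ∈ S) : (u - v).natDegree < orderOf γ :=
    (natDegree_sub_le u v).trans_lt (max_lt hu.1 hv.1)
  have sub_solves {u v : R[X]} (hu : u ∈ S) (hv : v ∈ S) :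
      A 1 * (u - v) + A 2 * (u - v).comp (C γ * X) = 0 := by
    rw [← dilationSubst_sub_dilationSubst, hu.2, hv.2, sub_zero]
  refine ⟨(f - g).natDegree, fun u hu v hv huv ↦ ?_⟩
  by_contra huv_ne
  have same_natDegree : (f - g).natDegree = (u - v).natDegree :=
    natDegree_eq_of_mul_add_mul_comp_eq_zero
      (ne_zero_or_ne_zero_of_dilationSubst_eq_zero hA hf.2) (sub_ne_zero.2 hfg)
      (sub_ne_zero.2 huv_ne) (natDegree_sub_lt hf hg) (natDegree_sub_lt hu hv)
      (sub_solves hf hg) (sub_solves hu hv)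
  apply leadingCoeff_ne_zero.2 (sub_ne_zero.2 huv_ne)
  rw [leadingCoeff, ← same_natDegree, coeff_sub]
  exact sub_eq_zero.2 huv

end DilationSubst

theorem hammingDist_add_card_filter_eq {ι : Type*} {β : ι → Type*} [Fintype ι]
    [∀ i, DecidableEq (β i)] (x y : ∀ i, β i) :
    hammingDist x y + (Finset.univ.filter fun i ↦ x i = y i).card = Fintype.card ι := by
  rw [hammingDist, add_comm]
  exact Finset.card_filter_add_card_filter_not _

/-- The folded Reed–Solomon codeword of `f` of length `N` with folding parameter two. Positions are
counted from `0`, so the entry at `i` pairs the values of `f` at `γ ^ i` and `γ ^ (i + 1)`. -/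
def foldedCodeword {R : Type*} [Semiring R] (γ : R) (N : ℕ) (f : R[X]) : Fin N → R × R :=
  fun i ↦ (f.eval (γ ^ (i : ℕ)), f.eval (γ ^ ((i : ℕ) + 1)))

theorem dilationSubst_eq_zero_of_hammingDist_add_le {R : Type*} [CommRing R] [IsDomain R]
    [DecidableEq R] {γ : R} {N D k : ℕ} (hN : N ≤ orderOf γ) {b : Fin N → R × R}
    {A : Fin 3 → R[X]} (h0 : (A 0).degree < ((D + k : ℕ) : WithBot ℕ)) (h1 : (A 1).degree ≤ D)
    (h2 : (A 2).degree ≤ D)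
    (hb : ∀ i : Fin N, (A 0).eval (γ ^ (i : ℕ)) + (A 1).eval (γ ^ (i : ℕ)) * (b i).1 +
      (A 2).eval (γ ^ (i : ℕ)) * (b i).2 = 0)
    {f : R[X]} (hf : f.degree < k)
    (hdist : hammingDist (foldedCodeword γ N f) b + (D + k) ≤ N) :
    dilationSubst γ A f = 0 := by
  have points_injective : Function.Injective fun i : Fin N ↦ γ ^ (i : ℕ) := fun i j hij ↦
    Fin.ext (pow_injOn_Iio_orderOf (i.2.trans_le hN) (j.2.trans_le hN) hij)
  have many_agreements :
      D + k ≤ (Finset.univ.filter fun i ↦ foldedCodeword γ N f i = b i).card := by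
    have := hammingDist_add_card_filter_eq (foldedCodeword γ N f) b
    rw [Fintype.card_fin] at this
    omega
  refine eq_zero_of_degree_lt_of_eval_index_eq_zero _ points_injective.injOn
    ((degree_dilationSubst_lt γ h0 h1 h2 hf).trans_le (by exact_mod_cast many_agreements)) ?_
  intro i hi
  have agree : foldedCodeword γ N f i = b i := (Finset.mem_filter.1 hi).2
  rw [eval_dilationSubst, ← pow_succ', ← hb i, ← agree, foldedCodeword]

theorem folded_RS_list_decodable_general {F : Type*} [Field F] [Fintype F] [DecidableEq F]
    {n k : ℕ} (γ : F) (hγ : n - 1 ≤ orderOf γ) (hk : 1 ≤ k) (hkn : k ≤ n - 2)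
    (b : Fin (n - 1) → F × F) :
    {f : F[X] | f.natDegree ≤ k - 1 ∧
      (hammingDist (foldedCodeword γ (n - 1) f) b : ℝ) ≤
        2 / 3 * ((n : ℝ) - 2 - (k : ℝ))}.Finite ∧
    {f : F[X] | f.natDegree ≤ k - 1 ∧
      (hammingDist (foldedCodeword γ (n - 1) f) b : ℝ) ≤
        2 / 3 * ((n : ℝ) - 2 - (k : ℝ))}.ncard ≤ Fintype.card F := by
  -- The least degree bound for which the interpolation system is underdetermined.
  obtain ⟨D, hD⟩ : ∃ D, D = (n - k) / 3 := ⟨_, rfl⟩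
  obtain ⟨A, hA, h0, h1, h2, hb⟩ := exists_linear_interpolant (D := D) (k := k)
    (fun i : Fin (n - 1) ↦ γ ^ (i : ℕ)) b (by rw [Fintype.card_fin]; omega)
  obtain ⟨m, coeff_injOn⟩ := exists_injOn_coeff_dilationSubst_eq_zero γ hA
  set S := {f : F[X] | f.natDegree ≤ k - 1 ∧
    (hammingDist (foldedCodeword γ (n - 1) f) b : ℝ) ≤ 2 / 3 * ((n : ℝ) - 2 - (k : ℝ))}
  have hS : S ⊆ {f | f.natDegree < orderOf γ ∧ dilationSubst γ A f = 0} := by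
    rintro f ⟨hf, hdist⟩
    have natDegree_lt : f.natDegree < k := by omega
    have hdist_nat : 3 * hammingDist (foldedCodeword γ (n - 1) f) b + 2 * (k + 2) ≤ 2 * n := by
      rify
      linarith
    refine ⟨by omega, dilationSubst_eq_zero_of_hammingDist_add_le hγ h0 h1 h2 hb ?_ (by omega)⟩
    exact degree_le_natDegree.trans_lt (by exact_mod_cast natDegree_lt)
  have coeff_injOn_S := coeff_injOn.mono hS
  refine ⟨Set.Finite.of_injOn (Set.mapsTo_univ _ _) coeff_injOn_S Set.finite_univ, ?_⟩
  rw [← coeff_injOn_S.ncard_image, ← Nat.card_eq_fintype_card]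
  exact Set.ncard_le_card _

/-- (List decoding of folded Reed–Solomon codes) Let `F` be the finite field of size
`q`, `γ` a primitive element of `F`, and `1 ≤ k ≤ n − 2`, `n ≤ q − 1`. The folded
Reed–Solomon code `FRS[n−1, k]` encodes a polynomial `f` of degree at most `k−1` as
the vector `((f(γ^{i−1}), f(γ^i)))_{i=1,…,n−1} ∈ (F × F)^{n−1}`. Then for every
received word `b ∈ (F × F)^{n−1}`, the set of polynomials `f` of degree at most `k−1`
whose codeword is within Hamming distance `τ(n−1) = (2/3)(n−2−k)` of `b` is finite of
size at most `q`. -/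
theorem folded_RS_list_decodable {F : Type*} [Field F] [Fintype F] [DecidableEq F]
    {q n k : ℕ} (hq : Fintype.card F = q)
    (γ : F) (hγ : orderOf γ = q - 1)
    (hk : 1 ≤ k) (hkn : k ≤ n - 2) (hnq : n ≤ q - 1)
    (b : Fin (n - 1) → F × F) :
    {f : Polynomial F | f.natDegree ≤ k - 1 ∧
      (hammingDist
        (fun i : Fin (n - 1) => (f.eval (γ ^ (i : ℕ)), f.eval (γ ^ ((i : ℕ) + 1))))
        b : ℝ) ≤ 2 / 3 * ((n : ℝ) - 2 - (k : ℝ))}.Finite ∧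
    {f : Polynomial F | f.natDegree ≤ k - 1 ∧
      (hammingDist
        (fun i : Fin (n - 1) => (f.eval (γ ^ (i : ℕ)), f.eval (γ ^ ((i : ℕ) + 1))))
        b : ℝ) ≤ 2 / 3 * ((n : ℝ) - 2 - (k : ℝ))}.ncard ≤ q := by
  subst hq
  exact folded_RS_list_decodable_general γ (by omega) hk hkn b
end
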